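/- Let G = (V,E) be a finite connected undirected unweighted graph with m edges. For any two distinct vertices i and j, the commute time satisfies κ_{ij} = 2·m·R_{ij}, where R_{ij} is the effective resistance between i and j in the electrical network obtained by replacing every edge by a unit resistor. -/

import Mathlib

open Finset

variable {V : Type*}

/-- The total weight incident to a vertex: `ω(i) = Σ_l ω(i,l)`. -/
noncomputable def vWeight [Fintype V] (w : V → V → ℝ) (i : V) : ℝ :=
  ∑ l, w i l

/-- The total weight of the graph (each edge counted once): `ω(G)`. -/
noncomputable def gWeight [Fintype V] (w : V → V → ℝ) : ℝ :=
  (∑ i, ∑ l, w i l) / 2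

/-- Transition probabilities of the random walk on the weighted graph:
from `i`, move to `l` with probability `ω(i,l)/ω(i)`. -/
noncomputable def walkStep [Fintype V] (w : V → V → ℝ) (i l : V) : ℝ :=
  w i l / vWeight w i

/-- `w` is a system of positive symmetric edge weights on a finite connected undirected
graph: symmetric, nonnegative, zero on the diagonal (and on non-edges), and the graph
whose edges are the pairs with positive weight is connected. -/
def IsWeight [Fintype V] (w : V → V → ℝ) : Prop :=
  (∀ a b, w a b = w b a) ∧ (∀ a b, 0 ≤ w a b) ∧ (∀ a, w a a = 0) ∧
    (∀ a b, Relation.ReflTransGen (fun x y => 0 < w x y) a b)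

/-- `hitSurv p j n i` is the probability that the Markov chain with transition kernel `p`
started at `i` has not visited `j` at any of the times `0, 1, …, n`. -/
noncomputable def hitSurv {S : Type*} [Fintype S] [DecidableEq S] (p : S → S → ℝ) (j : S) :
    ℕ → S → ℝ
  | 0 => fun i => if i = j then 0 else 1
  | n + 1 => fun i => if i = j then 0 else ∑ l, p i l * hitSurv p j n l

/-- Expected hitting time of `j` from `i`: the expected number of steps for the chain
started at `i` to first reach `j`, computed as `Σ_n P(T_j > n)`. -/
noncomputable def hitTime {S : Type*} [Fintype S] [DecidableEq S] (p : S → S → ℝ)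
    (i j : S) : ℝ :=
  ∑' n : ℕ, hitSurv p j n i

/-- A unit-current potential from `i` to `j`: Kirchhoff's equations when a unit current
enters at `i` and leaves at `j`. -/
def IsUnitPotential [Fintype V] (w : V → V → ℝ) (i j : V) (φ : V → ℝ) : Prop :=
  (∀ k, k ≠ i → k ≠ j → ∑ l, w k l * (φ k - φ l) = 0) ∧
    (∑ l, w i l * (φ i - φ l) = 1) ∧
    (∑ l, w j l * (φ j - φ l) = -1)

/-- `R` is the effective-resistance matrix of the weighted graph `w`:
`R a a = 0`, and for `a ≠ b`, `R a b = V_a - V_b` for a unit-current potential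
from `a` to `b`. -/
def IsResistance [Fintype V] (w : V → V → ℝ) (R : V → V → ℝ) : Prop :=
  (∀ a, R a a = 0) ∧
    ∀ a b, a ≠ b → ∃ φ, IsUnitPotential w a b φ ∧ R a b = φ a - φ b

/-- The weight function of an unweighted graph: weight `1` on edges, `0` elsewhere. -/
noncomputable def aw (G : SimpleGraph V) [DecidableRel G.Adj] (a b : V) : ℝ :=
  if G.Adj a b then 1 else 0

/-- Probability of a given trajectory: `trajProb p i xs` is the probability that the
chain started at `i` successively visits the vertices of the list `xs`. -/
noncomputable def trajProb {S : Type*} [Fintype S] (p : S → S → ℝ) : S → List S → ℝ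
  | _, [] => 1
  | i, x :: xs => p i x * trajProb p x xs

/-- Probability that the walk started at `i` has not visited every vertex by time `n`. -/
noncomputable def notCoveredProb [Fintype V] [DecidableEq V] (p : V → V → ℝ) (n : ℕ)
    (i : V) : ℝ :=
  ∑ xs : Fin n → V, trajProb p i (List.ofFn xs) *
    (if (i :: List.ofFn xs).toFinset = Finset.univ then 0 else 1)

/-- The cover time from `i`: the expected number of steps for the walk started at `i`
to have visited every vertex, computed as `Σ_n P(T_cov > n)`. -/
noncomputable def coverTime [Fintype V] [DecidableEq V] (p : V → V → ℝ) (i : V) : ℝ :=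
  ∑' n : ℕ, notCoveredProb p n i

/-- `visitSurv p j k n i` is the probability that the chain started at `i` is at `k` at
time `n` without having visited `j` at any of the times `0, …, n`. -/
noncomputable def visitSurv [Fintype V] [DecidableEq V] (p : V → V → ℝ) (j k : V) :
    ℕ → V → ℝ
  | 0 => fun i => if i = j then 0 else if i = k then 1 else 0
  | n + 1 => fun i => if i = j then 0 else ∑ l, p i l * visitSurv p j k n l

/-- `expVisits p i j k` is the expected number of visits to `k` (counting time `0`) of
the chain started at `i` strictly before its first visit to `j`. -/
noncomputable def expVisits [Fintype V] [DecidableEq V] (p : V → V → ℝ) (i j k : V) : ℝ :=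
  ∑' n : ℕ, visitSurv p j k n i

/-- `reachBeforeAux p i j n l` is the probability that the walk started at `l` reaches `j`
within `n` steps without visiting `i` first. -/
noncomputable def reachBeforeAux [Fintype V] [DecidableEq V] (p : V → V → ℝ) (i j : V) :
    ℕ → V → ℝ
  | 0 => fun l => if l = j then 1 else 0
  | n + 1 => fun l =>
      if l = j then 1 else if l = i then 0 else ∑ m, p l m * reachBeforeAux p i j n m

/-- The probability that the walk started at `i` reaches `j` before returning to `i`:
one step from `i` to `l`, then reach `j` before `i` (monotone limit in `n`). -/
noncomputable def escapeProb [Fintype V] [DecidableEq V] (p : V → V → ℝ) (i j : V) : ℝ :=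
  ∑ l, p i l * ⨆ n, reachBeforeAux p i j n l

/-- `hitSurvSet p F n x` is the probability that the chain started at `x` has not visited
the set `F` at any of the times `0, …, n`. -/
noncomputable def hitSurvSet {S : Type*} [Fintype S] (p : S → S → ℝ) (F : S → Prop)
    [DecidablePred F] : ℕ → S → ℝ
  | 0 => fun x => if F x then 0 else 1
  | n + 1 => fun x => if F x then 0 else ∑ y, p x y * hitSurvSet p F n y

/-- Expected hitting time of the set `F` from `x`, computed as `Σ_n P(T_F > n)`. -/
noncomputable def hitTimeSet {S : Type*} [Fintype S] (p : S → S → ℝ) (F : S → Prop)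
    [DecidablePred F] (x : S) : ℝ :=
  ∑' n : ℕ, hitSurvSet p F n x

/-- The associated chain `𝒢` on pairs `(P, i)` (visited set, current vertex): from
`(P, i)` it moves to `(P ∪ {j}, j)` with probability `ω(i,j)/ω(i)`. -/
noncomputable def pairStep [Fintype V] [DecidableEq V] (w : V → V → ℝ)
    (s t : Finset V × V) : ℝ :=
  if t.1 = insert t.2 s.1 then walkStep w s.2 t.2 else 0

/-- `exitProbAux p P j n i` is the probability that the walk started at `i` leaves `P`
within `n` steps and that the first vertex visited outside `P` is `j`. -/
noncomputable def exitProbAux [Fintype V] [DecidableEq V] (p : V → V → ℝ) (P : Finset V)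
    (j : V) : ℕ → V → ℝ
  | 0 => fun i => if i ∈ P then 0 else if i = j then 1 else 0
  | n + 1 => fun i =>
      if i ∈ P then ∑ l, p i l * exitProbAux p P j n l else if i = j then 1 else 0

/-- The probability that the first vertex outside `P` visited by the walk started at `i`
is `j` (monotone limit in the number of allowed steps). -/
noncomputable def exitProb [Fintype V] [DecidableEq V] (p : V → V → ℝ) (P : Finset V)
    (i j : V) : ℝ :=
  ⨆ n, exitProbAux p P j n i

/-- The negated weighted Laplacian `Δ` of the weighted graph `w` on `Fin n`. -/
noncomputable def negLaplacian (n : ℕ) (w : Fin n → Fin n → ℝ) :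
    Matrix (Fin n) (Fin n) ℝ :=
  Matrix.of fun k l => if k = l then -(∑ m, w k m) else w k l

/-- `Δ₂`: the negated weighted Laplacian with its first row replaced by the first row of
the identity matrix. -/
noncomputable def delta2 (n : ℕ) (hn : 0 < n) (w : Fin n → Fin n → ℝ) :
    Matrix (Fin n) (Fin n) ℝ :=
  (negLaplacian n w).updateRow ⟨0, hn⟩ (fun l => if l = ⟨0, hn⟩ then 1 else 0)

/-- The weight function obtained from `w` by adding weight `u` on the edge `{a, b}`. -/
noncomputable def addEdge [DecidableEq V] (w : V → V → ℝ) (a b : V) (u : ℝ)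
    (x y : V) : ℝ :=
  w x y + (if (x = a ∧ y = b) ∨ (x = b ∧ y = a) then u else 0)

/-!
Write `h_b k` for the expected hitting time of `b` from `k`. Conditioning on the first step of the
walk shows that the Laplacian of `h_b` is the vertex weight `ω` away from `b`; since every
Laplacian has total mass zero, `Δ h_b = ω - 2 ω(G) δ_b`. A unit-current potential `φ` satisfies
`Δ φ = δ_i - δ_j`, and as `Δ` is symmetric, pairing `φ` with `h_b` gives
`h_b i - h_b j = ⟨φ, ω⟩ - 2 ω(G) φ b`. Subtracting the instance `b = i` from the instance `b = j`
yields the commute time.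

The hitting times are finite because, by finiteness and connectedness, there are `N` and `c < 1`
such that from every vertex the walk avoids `b` up to time `N` with probability at most `c`.
-/

lemma summable_of_add_le_mul {f : ℕ → ℝ} (hf : ∀ n, 0 ≤ f n) {c : ℝ} (hc : c < 1) {N : ℕ}
    (hfc : ∀ n, f (n + N) ≤ c * f n) : Summable f := by
  refine summable_of_sum_range_le (c := (∑ n ∈ range N, f n) / (1 - c)) hf fun M ↦ ?_
  have hM : ∑ n ∈ range M, f n ≤ ∑ n ∈ range N, f n + c * ∑ n ∈ range M, f n := calc
    ∑ n ∈ range M, f n ≤ ∑ n ∈ range (N + M), f n :=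
      sum_le_sum_of_subset_of_nonneg (range_mono (Nat.le_add_left M N)) fun n _ _ ↦ hf n
    _ = ∑ n ∈ range N, f n + ∑ n ∈ range M, f (n + N) := by
      simp only [sum_range_add, add_comm]
    _ ≤ ∑ n ∈ range N, f n + c * ∑ n ∈ range M, f n := by
      rw [mul_sum]
      gcongr with n
      exact hfc n
  rw [le_div_iff₀ (sub_pos.2 hc)]
  linarith

section HittingTime

variable {S : Type*} [Fintype S] [DecidableEq S] {p : S → S → ℝ} {j k : S}

@[simp]
lemma hitSurv_self (p : S → S → ℝ) (j : S) (n : ℕ) : hitSurv p j n j = 0 := by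
  cases n <;> simp [hitSurv]

lemma hitSurv_zero_of_ne (p : S → S → ℝ) (hk : k ≠ j) : hitSurv p j 0 k = 1 :=
  if_neg hk

lemma hitSurv_succ_of_ne (p : S → S → ℝ) (hk : k ≠ j) (n : ℕ) :
    hitSurv p j (n + 1) k = ∑ l, p k l * hitSurv p j n l :=
  if_neg hk

lemma hitSurv_zero_le_one (p : S → S → ℝ) (j k : S) : hitSurv p j 0 k ≤ 1 := by
  simp only [hitSurv]
  split_ifs <;> norm_num

lemma hitSurv_nonneg (hp : ∀ a b, 0 ≤ p a b) (j : S) (n : ℕ) (k : S) : 0 ≤ hitSurv p j n k := by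
  induction n generalizing k with
  | zero => simp only [hitSurv]; split_ifs <;> norm_num
  | succ n ih =>
    simp only [hitSurv]
    split_ifs
    exacts [le_rfl, sum_nonneg fun l _ ↦ mul_nonneg (hp k l) (ih l)]

lemma hitSurv_antitone (hp : ∀ a b, 0 ≤ p a b) (hp_sum : ∀ a, ∑ b, p a b ≤ 1) (j k : S) :
    Antitone fun n ↦ hitSurv p j n k := by
  refine antitone_nat_of_succ_le fun n ↦ ?_
  induction n generalizing k with
  | zero =>
    obtain rfl | hk := eq_or_ne k j
    · simp
    rw [hitSurv_succ_of_ne p hk, hitSurv_zero_of_ne p hk]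
    refine le_trans ?_ (hp_sum k)
    gcongr with l
    exact mul_le_of_le_one_right (hp k l) (hitSurv_zero_le_one p j l)
  | succ n ih =>
    obtain rfl | hk := eq_or_ne k j
    · simp
    rw [hitSurv_succ_of_ne p hk, hitSurv_succ_of_ne p hk]
    gcongr with l
    exacts [hp k l, ih l]

lemma hitSurv_le_one (hp : ∀ a b, 0 ≤ p a b) (hp_sum : ∀ a, ∑ b, p a b ≤ 1) (j : S) (n : ℕ)
    (k : S) : hitSurv p j n k ≤ 1 :=
  (hitSurv_antitone hp hp_sum j k (Nat.zero_le n)).trans (hitSurv_zero_le_one p j k)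

lemma exists_hitSurv_lt_one (hp : ∀ a b, 0 ≤ p a b) (hp_sum : ∀ a, ∑ b, p a b ≤ 1)
    (hkj : Relation.ReflTransGen (fun a b ↦ 0 < p a b) k j) : ∃ n, hitSurv p j n k < 1 := by
  induction hkj using Relation.ReflTransGen.head_induction_on with
  | refl => exact ⟨0, by simp⟩
  | @head a b hab _ ih =>
    obtain ⟨n, hn⟩ := ih
    obtain rfl | ha := eq_or_ne a j
    · exact ⟨0, by simp⟩
    refine ⟨n + 1, ?_⟩
    rw [hitSurv_succ_of_ne p ha]
    refine lt_of_lt_of_le (sum_lt_sum (fun l _ ↦ ?_) ⟨b, mem_univ b, ?_⟩) (hp_sum a)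
    exacts [mul_le_of_le_one_right (hp a l) (hitSurv_le_one hp hp_sum j n l),
      mul_lt_of_lt_one_right hab hn]

lemma hitSurv_add_le_mul (hp : ∀ a b, 0 ≤ p a b) {N : ℕ} {c : ℝ}
    (hc : ∀ l, hitSurv p j N l ≤ c) (n : ℕ) (k : S) :
    hitSurv p j (n + N) k ≤ c * hitSurv p j n k := by
  obtain rfl | hk := eq_or_ne k j
  · simp
  induction n generalizing k with
  | zero => simpa [hitSurv_zero_of_ne p hk] using hc k
  | succ n ih =>
    rw [Nat.add_right_comm, hitSurv_succ_of_ne p hk, hitSurv_succ_of_ne p hk, mul_sum]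
    refine sum_le_sum fun l _ ↦ ?_
    rw [mul_left_comm]
    refine mul_le_mul_of_nonneg_left ?_ (hp k l)
    obtain rfl | hl := eq_or_ne l j
    exacts [by simp, ih l hl]

lemma summable_hitSurv (hp : ∀ a b, 0 ≤ p a b) (hp_sum : ∀ a, ∑ b, p a b ≤ 1)
    (hj : ∀ k, Relation.ReflTransGen (fun a b ↦ 0 < p a b) k j) (k : S) :
    Summable fun n ↦ hitSurv p j n k := by
  obtain ⟨N, hN⟩ : ∃ N, ∀ l, hitSurv p j N l < 1 := by
    refine (Filter.eventually_all.2 fun l ↦ ?_ : ∀ᶠ n in Filter.atTop, _).exists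
    obtain ⟨n, hn⟩ := exists_hitSurv_lt_one hp hp_sum (hj l)
    filter_upwards [Filter.eventually_ge_atTop n] with m hm
    exact (hitSurv_antitone hp hp_sum j l hm).trans_lt hn
  have : Nonempty S := ⟨k⟩
  obtain ⟨l, hl⟩ := Finite.exists_max (hitSurv p j N)
  exact summable_of_add_le_mul (hitSurv_nonneg hp j · k) (hN l) (hitSurv_add_le_mul hp hl · k)

@[simp]
lemma hitTime_self (p : S → S → ℝ) (j : S) : hitTime p j j = 0 := by
  simp [hitTime]

lemma hitTime_eq_one_add (hs : ∀ k, Summable fun n ↦ hitSurv p j n k) (hk : k ≠ j) :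
    hitTime p k j = 1 + ∑ l, p k l * hitTime p l j := by
  simp only [hitTime]
  rw [(hs k).tsum_eq_zero_add, hitSurv_zero_of_ne p hk]
  simp only [hitSurv_succ_of_ne p hk]
  rw [Summable.tsum_finsetSum fun l _ ↦ (hs l).mul_left _]
  simp only [tsum_mul_left]

end HittingTime

section WalkStep

variable [Fintype V] {w : V → V → ℝ}

lemma two_mul_gWeight (w : V → V → ℝ) : 2 * gWeight w = ∑ k, vWeight w k := by
  simp only [gWeight, vWeight]
  ring

lemma vWeight_nonneg (hw : ∀ a b, 0 ≤ w a b) (k : V) : 0 ≤ vWeight w k :=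
  sum_nonneg fun l _ ↦ hw k l

lemma vWeight_pos (hw : ∀ a b, 0 ≤ w a b) {k l : V} (hkl : 0 < w k l) : 0 < vWeight w k :=
  sum_pos' (fun l _ ↦ hw k l) ⟨l, mem_univ l, hkl⟩

lemma walkStep_nonneg (hw : ∀ a b, 0 ≤ w a b) (k l : V) : 0 ≤ walkStep w k l :=
  div_nonneg (hw k l) (vWeight_nonneg hw k)

lemma walkStep_pos (hw : ∀ a b, 0 ≤ w a b) {k l : V} (hkl : 0 < w k l) : 0 < walkStep w k l :=
  div_pos hkl (vWeight_pos hw hkl)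

lemma sum_walkStep_le_one (w : V → V → ℝ) (k : V) : ∑ l, walkStep w k l ≤ 1 := by
  simp only [walkStep, ← sum_div]
  exact div_self_le_one (vWeight w k)

lemma summable_hitSurv_walkStep [DecidableEq V] (hw : ∀ a b, 0 ≤ w a b) {j : V}
    (hj : ∀ k, Relation.ReflTransGen (fun a b ↦ 0 < w a b) k j) (k : V) :
    Summable fun n ↦ hitSurv (walkStep w) j n k :=
  summable_hitSurv (walkStep_nonneg hw) (sum_walkStep_le_one w)
    (fun l ↦ (hj l).lift id fun _ _ ↦ walkStep_pos hw) k

end WalkStep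

section Laplacian

variable [Fintype V] {w : V → V → ℝ}

/-- The Laplacian `Δ` of the weighted graph `w`, with the sign that makes it positive semidefinite:
`laplacian w φ k` is the net current out of `k` under the potential `φ`, so that Kirchhoff's
equations become `Δ φ = δ_i - δ_j`. -/
noncomputable def laplacian (w : V → V → ℝ) (f : V → ℝ) (k : V) : ℝ :=
  ∑ l, w k l * (f k - f l)

lemma laplacian_eq_vWeight_mul_sub (w : V → V → ℝ) (f : V → ℝ) (k : V) :
    laplacian w f k = vWeight w k * f k - ∑ l, w k l * f l := by
  simp only [laplacian, vWeight, mul_sub, sum_sub_distrib, sum_mul]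

lemma dotProduct_laplacian_comm (hw : ∀ a b, w a b = w b a) (f g : V → ℝ) :
    f ⬝ᵥ laplacian w g = g ⬝ᵥ laplacian w f := by
  have hswap : ∑ k, ∑ l, f k * (w k l * g l) = ∑ k, ∑ l, g k * (w k l * f l) := by
    rw [sum_comm]
    refine sum_congr rfl fun k _ ↦ sum_congr rfl fun l _ ↦ ?_
    rw [hw l k]
    ring
  simp only [dotProduct, laplacian_eq_vWeight_mul_sub, mul_sub, sum_sub_distrib, mul_sum, hswap]
  congr 1
  exact sum_congr rfl fun k _ ↦ by ring

lemma sum_laplacian (hw : ∀ a b, w a b = w b a) (f : V → ℝ) : ∑ k, laplacian w f k = 0 := by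
  simpa [dotProduct, laplacian] using dotProduct_laplacian_comm hw 1 f

lemma laplacian_eq_vWeight_mul_sub_walkStep {k : V} (hk : vWeight w k ≠ 0) (f : V → ℝ) :
    laplacian w f k = vWeight w k * (f k - ∑ l, walkStep w k l * f l) := by
  simp only [laplacian_eq_vWeight_mul_sub, mul_sub, mul_sum, walkStep, ← mul_assoc,
    mul_div_cancel₀ _ hk]

lemma IsUnitPotential.ne {i j : V} {φ : V → ℝ} (hφ : IsUnitPotential w i j φ) : i ≠ j := by
  rintro rfl
  linarith [hφ.2.1, hφ.2.2]

variable [DecidableEq V]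

lemma IsUnitPotential.laplacian_eq {i j : V} {φ : V → ℝ} (hφ : IsUnitPotential w i j φ) :
    laplacian w φ = Pi.single i 1 - Pi.single j 1 := by
  have hij := hφ.ne
  obtain ⟨hφ_harm, hφi, hφj⟩ := hφ
  ext k
  obtain rfl | hki := eq_or_ne k i
  · simpa [laplacian, hij] using hφi
  obtain rfl | hkj := eq_or_ne k j
  · simpa [laplacian, hki] using hφj
  simpa [laplacian, hki, hkj] using hφ_harm k hki hkj

lemma laplacian_hitTime_of_ne {j k : V} (hs : ∀ l, Summable fun n ↦ hitSurv (walkStep w) j n l)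
    (hk : vWeight w k ≠ 0) (hkj : k ≠ j) :
    laplacian w (hitTime (walkStep w) · j) k = vWeight w k := by
  rw [laplacian_eq_vWeight_mul_sub_walkStep hk, hitTime_eq_one_add hs hkj, add_sub_cancel_right,
    mul_one]

lemma laplacian_hitTime (hw_symm : ∀ a b, w a b = w b a) (hw : ∀ a b, 0 ≤ w a b) {j : V}
    (hj : ∀ k, Relation.ReflTransGen (fun a b ↦ 0 < w a b) k j) :
    laplacian w (hitTime (walkStep w) · j) = vWeight w - Pi.single j (2 * gWeight w) := by
  have h_ne : ∀ k ≠ j, laplacian w (hitTime (walkStep w) · j) k = vWeight w k := by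
    intro k hkj
    obtain rfl | ⟨l, hkl, -⟩ := (hj k).cases_head
    · exact absurd rfl hkj
    exact laplacian_hitTime_of_ne (summable_hitSurv_walkStep hw hj) (vWeight_pos hw hkl).ne' hkj
  ext k
  obtain rfl | hkj := eq_or_ne k j
  · have h_sum := sum_laplacian hw_symm (hitTime (walkStep w) · k)
    rw [← add_sum_erase _ _ (mem_univ k),
      sum_congr rfl fun l hl ↦ h_ne l (ne_of_mem_erase hl)] at h_sum
    rw [Pi.sub_apply, Pi.single_eq_same, two_mul_gWeight, ← add_sum_erase _ _ (mem_univ k)]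
    linarith
  · simp [h_ne k hkj, hkj]

lemma IsUnitPotential.hitTime_sub_hitTime (hw_symm : ∀ a b, w a b = w b a)
    (hw : ∀ a b, 0 ≤ w a b) {b : V} (hb : ∀ k, Relation.ReflTransGen (fun x y ↦ 0 < w x y) k b)
    {i j : V} {φ : V → ℝ} (hφ : IsUnitPotential w i j φ) :
    hitTime (walkStep w) i b - hitTime (walkStep w) j b =
      φ ⬝ᵥ vWeight w - φ b * (2 * gWeight w) := by
  simpa [laplacian_hitTime hw_symm hw hb, hφ.laplacian_eq, dotProduct_sub] using
    (dotProduct_laplacian_comm hw_symm φ (hitTime (walkStep w) · b)).symm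

theorem commute_time_resistance_unweighted_general (hw_symm : ∀ a b, w a b = w b a)
    (hw : ∀ a b, 0 ≤ w a b) (hw_conn : ∀ a b, Relation.ReflTransGen (fun x y ↦ 0 < w x y) a b)
    {i j : V} {φ : V → ℝ} (hφ : IsUnitPotential w i j φ) :
    hitTime (walkStep w) i j + hitTime (walkStep w) j i = 2 * gWeight w * (φ i - φ j) := by
  have hi := hφ.hitTime_sub_hitTime hw_symm hw (hw_conn · i)
  have hj := hφ.hitTime_sub_hitTime hw_symm hw (hw_conn · j)
  rw [hitTime_self] at hi hj
  linarith

end Laplacian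

section Unweighted

variable (G : SimpleGraph V) [DecidableRel G.Adj]

lemma aw_symm (a b : V) : aw G a b = aw G b a := by
  simp [aw, G.adj_comm]

lemma aw_nonneg (a b : V) : 0 ≤ aw G a b := by
  rw [aw]
  split_ifs <;> norm_num

variable {G} in
lemma aw_pos_iff {a b : V} : 0 < aw G a b ↔ G.Adj a b := by
  rw [aw]
  split_ifs with hab <;> simp [hab]

variable {G} in
lemma reflTransGen_aw_pos (hG : G.Connected) (a b : V) :
    Relation.ReflTransGen (fun x y ↦ 0 < aw G x y) a b := by
  simpa only [aw_pos_iff, ← SimpleGraph.reachable_iff_reflTransGen] using hG a b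

variable [Fintype V]

lemma vWeight_aw (k : V) : vWeight (aw G) k = G.degree k := by
  simp [vWeight, aw, ← G.card_neighborFinset_eq_degree, G.neighborFinset_eq_filter]

lemma gWeight_aw : gWeight (aw G) = #G.edgeFinset := by
  have h_handshake : (∑ k, (G.degree k : ℝ)) = 2 * #G.edgeFinset := by
    exact_mod_cast G.sum_degrees_eq_twice_card_edges
  have h_sum := two_mul_gWeight (aw G)
  simp only [vWeight_aw] at h_sum
  linarith

end Unweighted

/-- On an unweighted connected graph with `m` edges,
`κ_{ij} = 2·m·R_{ij}` for distinct vertices `i, j`. -/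
theorem commute_time_resistance_unweighted
    {V : Type*} [Fintype V] [DecidableEq V] (G : SimpleGraph V) [DecidableRel G.Adj]
    (hG : G.Connected) (i j : V) (hij : i ≠ j)
    (φ : V → ℝ) (hφ : IsUnitPotential (aw G) i j φ) :
    hitTime (walkStep (aw G)) i j + hitTime (walkStep (aw G)) j i =
      2 * (G.edgeFinset.card : ℝ) * (φ i - φ j) := by
  rw [← gWeight_aw]
  exact commute_time_resistance_unweighted_general (aw_symm G) (aw_nonneg G)
    (reflTransGen_aw_pos hG) hφ
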